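/- Let X ∈ ℝ^{m×n}, let 0 ≤ ε₁ < 1 and 0 ≤ ε₂ < 1, let Ω₁ ∈ ℝ^{s₁×m} be an ε₁-subspace embedding for the column space of X, and let Ω₂ ∈ ℝ^{s₂×s₁} be an ε₂-subspace embedding for the column space of Ω₁X. Set ε_s = ε₁ + ε₂ − ε₁ε₂ and ε_b = ε₁ + ε₂ + ε₁ε₂. Then √(1−ε_s)·‖X‖_g ≤ ‖Ω₂Ω₁X‖_g ≤ √(1+ε_b)·‖X‖_g, where ‖A‖_g = √n · [A]_g and [A]_g is the maximum Euclidean norm among the columns of A. -/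

import Mathlib

open scoped BigOperators

/-- Euclidean 2-norm of a vector in `Fin m → ℝ`. -/
noncomputable def evNorm {m : ℕ} (x : Fin m → ℝ) : ℝ :=
  Real.sqrt (∑ i, x i ^ 2)

/-- Euclidean inner product of vectors in `Fin m → ℝ`. -/
noncomputable def evInner {m : ℕ} (x y : Fin m → ℝ) : ℝ :=
  ∑ i, x i * y i

/-- `[X]_g`: the maximum Euclidean 2-norm among the columns of `X`. -/
noncomputable def gMax {m n : ℕ} (X : Matrix (Fin m) (Fin n) ℝ) : ℝ :=
  ⨆ j : Fin n, evNorm (fun i => X i j)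

/-- `‖X‖_g = √n · [X]_g` where `n` is the number of columns of `X`. -/
noncomputable def gNorm {m n : ℕ} (X : Matrix (Fin m) (Fin n) ℝ) : ℝ :=
  Real.sqrt n * gMax X

/-- Spectral norm (largest singular value): supremum of `‖Xv‖₂` over unit vectors `v`. -/
noncomputable def evSpectralNorm {m n : ℕ} (X : Matrix (Fin m) (Fin n) ℝ) : ℝ :=
  ⨆ v : {v : Fin n → ℝ // evNorm v = 1}, evNorm (X.mulVec v.1)

/-- Smallest singular value: infimum of `‖Xv‖₂` over unit vectors `v`. -/
noncomputable def sigmaMin {m n : ℕ} (X : Matrix (Fin m) (Fin n) ℝ) : ℝ :=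
  ⨅ v : {v : Fin n → ℝ // evNorm v = 1}, evNorm (X.mulVec v.1)

/-- Frobenius norm of a real matrix. -/
noncomputable def frobeniusNorm {m n : ℕ} (X : Matrix (Fin m) (Fin n) ℝ) : ℝ :=
  Real.sqrt (∑ i, ∑ j, X i j ^ 2)

/-- `Ω` is an `ε`-subspace embedding for the subspace `K ⊆ ℝ^m`. -/
def IsSubspaceEmbedding {s m : ℕ} (ε : ℝ) (Ω : Matrix (Fin s) (Fin m) ℝ)
    (K : Submodule ℝ (Fin m → ℝ)) : Prop :=
  ∀ x ∈ K, ∀ y ∈ K,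
    |evInner x y - evInner (Ω.mulVec x) (Ω.mulVec y)| ≤ ε * evNorm x * evNorm y

/-- Column space of a matrix: the span of its columns. -/
noncomputable def colSpace {m n : ℕ} (X : Matrix (Fin m) (Fin n) ℝ) :
    Submodule ℝ (Fin m → ℝ) :=
  Submodule.span ℝ (Set.range fun j : Fin n => fun i => X i j)

theorem ev_sq {m : ℕ} (x : Fin m → ℝ) : evInner x x = evNorm x ^ 2 := by
  unfold evInner evNorm
  rw [Real.sq_sqrt (Finset.sum_nonneg fun i _ => sq_nonneg _)]
  exact Finset.sum_congr rfl fun i _ => (sq (x i)).symm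

theorem evNorm_nonneg' {m : ℕ} (x : Fin m → ℝ) : 0 ≤ evNorm x := Real.sqrt_nonneg _

theorem gMax_nonneg {m n : ℕ} (X : Matrix (Fin m) (Fin n) ℝ) : 0 ≤ gMax X :=
  Real.iSup_nonneg fun _ => evNorm_nonneg' _

theorem le_gMax {m n : ℕ} (X : Matrix (Fin m) (Fin n) ℝ) (j : Fin n) :
    evNorm (fun i => X i j) ≤ gMax X :=
  le_ciSup (f := fun j : Fin n => evNorm (fun i => X i j)) (Set.finite_range _).bddAbove j

theorem col_bounds {s m n : ℕ} {ε : ℝ} (h1 : ε < 1) (h0 : 0 ≤ ε)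
    (X : Matrix (Fin m) (Fin n) ℝ) (Ω : Matrix (Fin s) (Fin m) ℝ)
    (hΩ : IsSubspaceEmbedding ε Ω (colSpace X)) (j : Fin n) :
    Real.sqrt (1 - ε) * evNorm (fun i => X i j) ≤ evNorm (fun i => (Ω * X) i j) ∧
    evNorm (fun i => (Ω * X) i j) ≤ Real.sqrt (1 + ε) * evNorm (fun i => X i j) := by
  have hm : (fun i => X i j) ∈ colSpace X := Submodule.subset_span ⟨j, rfl⟩
  have h := hΩ _ hm _ hm
  have e : Ω.mulVec (fun i => X i j) = fun i => (Ω * X) i j := rfl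
  rw [e, ev_sq, ev_sq, abs_le] at h
  have ha := evNorm_nonneg' (fun i => X i j)
  have hb := evNorm_nonneg' (fun i => (Ω * X) i j)
  constructor
  · refine (abs_le_of_sq_le_sq' ?_ hb).2
    rw [mul_pow, Real.sq_sqrt (by linarith)]
    nlinarith [h.2]
  · refine (abs_le_of_sq_le_sq' ?_ (mul_nonneg (Real.sqrt_nonneg _) ha)).2
    rw [mul_pow, Real.sq_sqrt (by linarith)]
    nlinarith [h.1]

theorem gMax_bounds {s m n : ℕ} {ε : ℝ} (h1 : ε < 1) (h0 : 0 ≤ ε)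
    (X : Matrix (Fin m) (Fin n) ℝ) (Ω : Matrix (Fin s) (Fin m) ℝ)
    (hΩ : IsSubspaceEmbedding ε Ω (colSpace X)) :
    Real.sqrt (1 - ε) * gMax X ≤ gMax (Ω * X) ∧
    gMax (Ω * X) ≤ Real.sqrt (1 + ε) * gMax X := by
  constructor
  · conv_lhs => unfold gMax
    rw [Real.mul_iSup_of_nonneg (Real.sqrt_nonneg _)]
    exact Real.iSup_le (fun j => (col_bounds h1 h0 X Ω hΩ j).1.trans (le_gMax _ j))
      (gMax_nonneg _)
  · exact Real.iSup_le (fun j => (col_bounds h1 h0 X Ω hΩ j).2.trans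
      (mul_le_mul_of_nonneg_left (le_gMax _ j) (Real.sqrt_nonneg _)))
      (mul_nonneg (Real.sqrt_nonneg _) (gMax_nonneg _))

/-- Multi-sketching, `‖·‖_g` norm: `√(1−ε_s)·‖X‖_g ≤ ‖Ω₂Ω₁X‖_g ≤ √(1+ε_b)·‖X‖_g`. -/
theorem multiSketch_gNorm_bounds {s₁ s₂ m n : ℕ} {ε₁ ε₂ : ℝ}
    (hε₁0 : 0 ≤ ε₁) (hε₁1 : ε₁ < 1) (hε₂0 : 0 ≤ ε₂) (hε₂1 : ε₂ < 1)
    (X : Matrix (Fin m) (Fin n) ℝ)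
    (Ω₁ : Matrix (Fin s₁) (Fin m) ℝ) (Ω₂ : Matrix (Fin s₂) (Fin s₁) ℝ)
    (hΩ₁ : IsSubspaceEmbedding ε₁ Ω₁ (colSpace X))
    (hΩ₂ : IsSubspaceEmbedding ε₂ Ω₂ (colSpace (Ω₁ * X))) :
    Real.sqrt (1 - (ε₁ + ε₂ - ε₁ * ε₂)) * gNorm X ≤ gNorm (Ω₂ * Ω₁ * X) ∧
      gNorm (Ω₂ * Ω₁ * X) ≤
        Real.sqrt (1 + (ε₁ + ε₂ + ε₁ * ε₂)) * gNorm X := by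
  obtain ⟨a1, b1⟩ := gMax_bounds hε₁1 hε₁0 X Ω₁ hΩ₁
  obtain ⟨a2, b2⟩ := gMax_bounds hε₂1 hε₂0 (Ω₁ * X) Ω₂ hΩ₂
  rw [← Matrix.mul_assoc] at a2 b2
  have e1 : 1 - (ε₁ + ε₂ - ε₁ * ε₂) = (1 - ε₂) * (1 - ε₁) := by ring
  have e2 : 1 + (ε₁ + ε₂ + ε₁ * ε₂) = (1 + ε₂) * (1 + ε₁) := by ring
  rw [e1, e2, Real.sqrt_mul (by linarith), Real.sqrt_mul (by linarith)]
  unfold gNorm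
  constructor
  · rw [mul_left_comm, mul_assoc]
    exact mul_le_mul_of_nonneg_left
      ((mul_le_mul_of_nonneg_left a1 (Real.sqrt_nonneg _)).trans a2) (Real.sqrt_nonneg _)
  · rw [mul_left_comm _ (Real.sqrt (n : ℝ)), mul_assoc (Real.sqrt (1 + ε₂))]
    exact mul_le_mul_of_nonneg_left
      (b2.trans (mul_le_mul_of_nonneg_left b1 (Real.sqrt_nonneg _))) (Real.sqrt_nonneg _)
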